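/- Let A and B be finite-dimensional real affine spaces over V_A and V_B respectively, let φ : B → A be an affine map with linear part dφ : V_B → V_A, let g be a symmetric bilinear form on V_A, and let ḡ be the pullback bilinear form on V_B defined by ḡ(x, y) = g(dφ(x), dφ(y)); assume ḡ ≠ 0. Then: (a) for every δ in W_g (formed on A with respect to g), the composition δ∘φ belongs to W_{ḡ} (formed on B with respect to ḡ), so precomposition with φ defines a linear map T : W_g → W_{ḡ}; and (b) for all linear functionals v̄, w̄ on W_{ḡ}: CM_{ḡ}(v̄, w̄) = CM_g(v̄∘T, w̄∘T). -/

import Mathlib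

/-!
Along the segment from `P` to `Q`, a quadratic function with Hessian `H` deviates from its affine
interpolation by `t (1 - t) / 2 * H (Q - P, Q - P)`. Subtracting from `δ ∈ W_g` the right multiple
of `P ↦ g (P - O, P - O)` therefore leaves an affine function, so `W_g` is finite-dimensional and
its dual is spanned by the evaluations, which separate its elements.

Since `ev_P - ev_Q` kills the constants and is represented by `P - Q`, polarising with the isotropy
of the evaluations gives `CM_g (ev_P, ev_Q) = g (P - Q, P - Q) / 2`. As `ev_P ∘ T = ev_{φ(P)}`, the
two bilinear forms to be compared agree on evaluations, and hence everywhere.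
-/

/-- A function `δ : A → ℝ` on a real affine space is *quadratic* if for all points
`P, Q` and all `α, β ∈ ℝ` with `α + β = 1`,
`δ(α·P + β·Q) = α(α−β)·δ(P) + β(β−α)·δ(Q) + 4αβ·δ(midpoint(P,Q))`. -/
def IsQuadraticFn {V A : Type*} [AddCommGroup V] [Module ℝ V] [AddTorsor V A]
    (δ : A → ℝ) : Prop :=
  ∀ (P Q : A) (α β : ℝ), α + β = 1 →
    δ (AffineMap.lineMap P Q β) =
      α * (α - β) * δ P + β * (β - α) * δ Q + 4 * α * β * δ (midpoint ℝ P Q)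

/-- `B` is the Hessian of `δ`. -/
def IsHessianOf {V A : Type*} [AddCommGroup V] [Module ℝ V] [AddTorsor V A]
    (δ : A → ℝ) (B : LinearMap.BilinForm ℝ V) : Prop :=
  ∀ P Q : A, 2 * δ P + 2 * δ Q - 4 * δ (midpoint ℝ P Q) =
    (1/2 : ℝ) * B (Q -ᵥ P) (Q -ᵥ P)

/-- `W_g`: the space of quadratic functions `A → ℝ` whose Hessian is a scalar
multiple of `g`, as a submodule of `A → ℝ`. -/
def Wg {V : Type*} [AddCommGroup V] [Module ℝ V]
    (g : LinearMap.BilinForm ℝ V) (A : Type*) [AddTorsor V A] :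
    Submodule ℝ (A → ℝ) where
  carrier := {δ : A → ℝ | IsQuadraticFn δ ∧ ∃ c : ℝ, IsHessianOf δ (c • g)}
  add_mem' := by
    rintro a b ⟨ha1, ca, ha2⟩ ⟨hb1, cb, hb2⟩
    refine ⟨fun P Q α β h => ?_, ca + cb, fun P Q => ?_⟩
    · have h1 := ha1 P Q α β h
      have h2 := hb1 P Q α β h
      simp only [Pi.add_apply]
      linear_combination h1 + h2
    · have h1 := ha2 P Q
      have h2 := hb2 P Q
      simp only [Pi.add_apply, LinearMap.add_apply, LinearMap.smul_apply,
        smul_eq_mul] at h1 h2 ⊢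
      linear_combination h1 + h2
  zero_mem' := by
    refine ⟨fun P Q α β h => ?_, 0, fun P Q => ?_⟩
    · simp only [Pi.zero_apply]; ring
    · simp only [Pi.zero_apply, zero_smul, LinearMap.zero_apply]; ring
  smul_mem' := by
    rintro c a ⟨ha1, ca, ha2⟩
    refine ⟨fun P Q α β h => ?_, c * ca, fun P Q => ?_⟩
    · have h1 := ha1 P Q α β h
      simp only [Pi.smul_apply, smul_eq_mul]
      linear_combination c * h1
    · have h1 := ha2 P Q
      simp only [Pi.smul_apply, smul_eq_mul, LinearMap.smul_apply] at h1 ⊢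
      linear_combination c * h1

/-- The evaluation functional `ev_P : W_g → ℝ` at a point `P`. -/
def evW {V : Type*} [AddCommGroup V] [Module ℝ V]
    (g : LinearMap.BilinForm ℝ V) {A : Type*} [AddTorsor V A] (P : A) :
    Module.Dual ℝ (Wg g A) where
  toFun δ := (δ : A → ℝ) P
  map_add' x y := rfl
  map_smul' c x := rfl

/-- `φ` annihilates the constant function `1 ∈ W_g`. -/
def AnnihilatesOne {V : Type*} [AddCommGroup V] [Module ℝ V]
    (g : LinearMap.BilinForm ℝ V) {A : Type*} [AddTorsor V A]
    (φ : Module.Dual ℝ (Wg g A)) : Prop :=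
  ∀ h1 : (fun _ : A => (1 : ℝ)) ∈ Wg g A, φ ⟨fun _ => (1 : ℝ), h1⟩ = 0

/-- `x ∈ V` represents the functional `φ` on `W_g`: for every affine function
`f : A → ℝ` (an element of `W_g`), `φ(f) = (linear part of f)(x)`. -/
def Represents {V : Type*} [AddCommGroup V] [Module ℝ V]
    (g : LinearMap.BilinForm ℝ V) {A : Type*} [AddTorsor V A]
    (φ : Module.Dual ℝ (Wg g A)) (x : V) : Prop :=
  ∀ (f : A →ᵃ[ℝ] ℝ) (hf : ⇑f ∈ Wg g A), φ ⟨⇑f, hf⟩ = f.linear x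

/-- `C` is a Cayley–Menger form for `g`: a symmetric bilinear form on the dual of
`W_g` such that (i) every evaluation functional `ev_P` is isotropic, and (ii) on
functionals annihilating the constant `1`, `C(φ, ψ) = −g(x_φ, x_ψ)`. -/
def IsCayleyMenger {V : Type*} [AddCommGroup V] [Module ℝ V]
    (g : LinearMap.BilinForm ℝ V) (A : Type*) [AddTorsor V A]
    (C : LinearMap.BilinForm ℝ (Module.Dual ℝ (Wg g A))) : Prop :=
  (∀ φ ψ, C φ ψ = C ψ φ) ∧
  (∀ P : A, C (evW g P) (evW g P) = 0) ∧
  (∀ (φ ψ : Module.Dual ℝ (Wg g A)) (x y : V),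
    AnnihilatesOne g φ → AnnihilatesOne g ψ →
    Represents g φ x → Represents g ψ y → C φ ψ = - g x y)

theorem span_range_eq_top_of_separating {K E ι : Type*} [Field K] [AddCommGroup E] [Module K E]
    [FiniteDimensional K E] {L : ι → Module.Dual K E} (hL : ∀ x, (∀ i, L i x = 0) → x = 0) :
    Submodule.span K (Set.range L) = ⊤ := by
  refine Submodule.eq_top_iff'.2 fun f => FiniteDimensional.mem_span_of_iInf_ker_le_ker ?_
  intro x hx
  rw [hL x ((Submodule.mem_iInf _).1 hx)]
  exact zero_mem _

theorem exists_affineMap_coe_eq_of_apply_lineMap {R V A W X : Type*} [Ring R] [Invertible (2 : R)]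
    [AddCommGroup V] [Module R V] [AddTorsor V A] [AddCommGroup W] [Module R W] [AddTorsor W X]
    {f : A → X}
    (hf : ∀ P Q (t : R), f (AffineMap.lineMap P Q t) = AffineMap.lineMap (f P) (f Q) t) :
    ∃ F : A →ᵃ[R] X, ⇑F = f := by
  obtain ⟨O⟩ : Nonempty A := inferInstance
  have map_midpoint (v w : V) : f (midpoint R v w +ᵥ O) -ᵥ f O =
      midpoint R (f (v +ᵥ O) -ᵥ f O) (f (w +ᵥ O) -ᵥ f O) :=
    calc f (midpoint R v w +ᵥ O) -ᵥ f O
        = f (midpoint R (v +ᵥ O) (w +ᵥ O)) -ᵥ f O :=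
          congrArg (f · -ᵥ f O) ((AffineEquiv.vaddConst R O).map_midpoint v w)
      _ = midpoint R (f (v +ᵥ O)) (f (w +ᵥ O)) -ᵥ f O := congrArg (· -ᵥ f O) (hf _ _ _)
      _ = midpoint R (f (v +ᵥ O) -ᵥ f O) (f (w +ᵥ O) -ᵥ f O) :=
          (AffineEquiv.vaddConst R (f O)).symm.map_midpoint _ _
  let L : V →+ W :=
    AddMonoidHom.ofMapMidpoint R R (fun v => f (v +ᵥ O) -ᵥ f O) (by simp) map_midpoint
  have hL (v : V) : L v = f (v +ᵥ O) -ᵥ f O := rfl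
  have L_smul (t : R) (v : V) : L (t • v) = t • L v := by
    have h := hf O (v +ᵥ O) t
    rw [AffineMap.lineMap_apply, vadd_vsub] at h
    rw [hL, h, AffineMap.lineMap_vsub_left, hL]
  exact ⟨AffineMap.mk' f { L with map_smul' := L_smul } O fun P => by simp [hL], rfl⟩

theorem bilinForm_apply_lineMap_vsub_self {R V A : Type*} [CommRing R] [AddCommGroup V] [Module R V]
    [AddTorsor V A] (g : LinearMap.BilinForm R V) (O P Q : A) (t : R) :
    g (AffineMap.lineMap P Q t -ᵥ O) (AffineMap.lineMap P Q t -ᵥ O) =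
      (1 - t) * g (P -ᵥ O) (P -ᵥ O) + t * g (Q -ᵥ O) (Q -ᵥ O) -
        t * (1 - t) * g (Q -ᵥ P) (Q -ᵥ P) := by
  have hline : AffineMap.lineMap P Q t -ᵥ O = t • (Q -ᵥ P) + (P -ᵥ O) := by
    rw [AffineMap.lineMap_apply, vadd_vsub_assoc]
  have hQ : Q -ᵥ O = (Q -ᵥ P) + (P -ᵥ O) := (vsub_add_vsub_cancel Q P O).symm
  simp only [hline, hQ, map_add, map_smul, LinearMap.add_apply, LinearMap.smul_apply, smul_eq_mul]
  ring

section

variable {V A VB B : Type*} [AddCommGroup V] [Module ℝ V] [AddTorsor V A]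
  [AddCommGroup VB] [Module ℝ VB] [AddTorsor VB B]

section Quadratic

variable {δ : A → ℝ} {H : LinearMap.BilinForm ℝ V}

theorem IsQuadraticFn.apply_lineMap (hδ : IsQuadraticFn δ) (hH : IsHessianOf δ H)
    (P Q : A) (t : ℝ) :
    δ (AffineMap.lineMap P Q t) =
      (1 - t) * δ P + t * δ Q - t * (1 - t) / 2 * H (Q -ᵥ P) (Q -ᵥ P) := by
  linear_combination hδ P Q (1 - t) t (by ring) - (1 - t) * t * hH P Q

theorem IsQuadraticFn.exists_affineMap (hδ : IsQuadraticFn δ) (hH : IsHessianOf δ H) (O : A) :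
    ∃ f : A →ᵃ[ℝ] ℝ, ∀ P, f P = δ P - H (P -ᵥ O) (P -ᵥ O) / 2 := by
  obtain ⟨f, hf⟩ := exists_affineMap_coe_eq_of_apply_lineMap (R := ℝ)
    (f := fun P => δ P - H (P -ᵥ O) (P -ᵥ O) / 2) fun P Q t => by
      rw [hδ.apply_lineMap hH, bilinForm_apply_lineMap_vsub_self, AffineMap.lineMap_apply_module,
        smul_eq_mul, smul_eq_mul]
      ring
  exact ⟨f, congrFun hf⟩

theorem IsQuadraticFn.comp_affineMap (hδ : IsQuadraticFn δ) (φ : B →ᵃ[ℝ] A) :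
    IsQuadraticFn (δ ∘ φ) := fun P Q α β h => by
  simpa only [Function.comp_apply, AffineMap.apply_lineMap, AffineMap.map_midpoint]
    using hδ (φ P) (φ Q) α β h

theorem IsHessianOf.comp_affineMap (hH : IsHessianOf δ H) (φ : B →ᵃ[ℝ] A) :
    IsHessianOf (δ ∘ φ) (H.comp φ.linear φ.linear) := fun P Q => by
  simpa only [Function.comp_apply, AffineMap.map_midpoint, LinearMap.BilinForm.comp_apply,
    AffineMap.linearMap_vsub] using hH (φ P) (φ Q)

end Quadratic

section Wg

variable {g : LinearMap.BilinForm ℝ V}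

theorem comp_affineMap_mem_Wg {δ : A → ℝ} (hδ : δ ∈ Wg g A) (φ : B →ᵃ[ℝ] A) :
    δ ∘ φ ∈ Wg (g.comp φ.linear φ.linear) B := by
  obtain ⟨hquad, c, hc⟩ := hδ
  exact ⟨hquad.comp_affineMap φ, c, hc.comp_affineMap φ⟩

theorem evW_comp_of_coe_apply_eq_comp {gbar : LinearMap.BilinForm ℝ VB} {φ : B → A}
    {T : Wg g A →ₗ[ℝ] Wg gbar B} (hT : ∀ δ, (T δ : B → ℝ) = (δ : A → ℝ) ∘ φ) (P : B) :
    (evW gbar P).comp T = evW g (φ P) :=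
  LinearMap.ext fun δ => congrFun (hT δ) P

instance finiteDimensional_Wg [FiniteDimensional ℝ V] : FiniteDimensional ℝ (Wg g A) := by
  obtain ⟨O⟩ : Nonempty A := inferInstance
  let Φ : ℝ × (A →ᵃ[ℝ] ℝ) →ₗ[ℝ] A → ℝ :=
    { toFun p P := p.1 * g (P -ᵥ O) (P -ᵥ O) + p.2 P
      map_add' p q := by
        ext P
        simp only [Prod.fst_add, Prod.snd_add, AffineMap.coe_add, Pi.add_apply]
        ring
      map_smul' r p := by
        ext P
        simp only [Prod.smul_fst, Prod.smul_snd, AffineMap.coe_smul, Pi.smul_apply, smul_eq_mul,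
          RingHom.id_apply]
        ring }
  refine Submodule.finiteDimensional_of_le (S₂ := LinearMap.range Φ) ?_
  rintro δ ⟨hδ, c, hc⟩
  obtain ⟨f, hf⟩ := hδ.exists_affineMap hc O
  refine ⟨(c / 2, f), funext fun P => ?_⟩
  change c / 2 * g (P -ᵥ O) (P -ᵥ O) + f P = δ P
  rw [hf, LinearMap.smul_apply, LinearMap.smul_apply, smul_eq_mul]
  ring

theorem span_range_evW [FiniteDimensional ℝ V] :
    Submodule.span ℝ (Set.range (evW g : A → Module.Dual ℝ (Wg g A))) = ⊤ :=
  span_range_eq_top_of_separating fun _ h => Subtype.ext (funext h)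

theorem bilinForm_ext_evW [FiniteDimensional ℝ V]
    {C C' : LinearMap.BilinForm ℝ (Module.Dual ℝ (Wg g A))}
    (h : ∀ P Q : A, C (evW g P) (evW g Q) = C' (evW g P) (evW g Q)) : C = C' :=
  LinearMap.ext_on_range span_range_evW fun P => LinearMap.ext_on_range span_range_evW (h P)

end Wg

section CayleyMenger

variable {g : LinearMap.BilinForm ℝ V}

theorem annihilatesOne_evW_sub_evW (P Q : A) : AnnihilatesOne g (evW g P - evW g Q) :=
  fun _ => sub_self (1 : ℝ)

theorem represents_evW_sub_evW (P Q : A) : Represents g (evW g P - evW g Q) (P -ᵥ Q) :=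
  fun f _ => (f.linearMap_vsub P Q).symm

theorem IsCayleyMenger.apply_evW_evW {C : LinearMap.BilinForm ℝ (Module.Dual ℝ (Wg g A))}
    (hC : IsCayleyMenger g A C) (P Q : A) :
    C (evW g P) (evW g Q) = g (P -ᵥ Q) (P -ᵥ Q) / 2 := by
  obtain ⟨hsymm, hiso, hneg⟩ := hC
  have hann : AnnihilatesOne g (evW g P - evW g Q) := annihilatesOne_evW_sub_evW P Q
  have hrep : Represents g (evW g P - evW g Q) (P -ᵥ Q) := represents_evW_sub_evW P Q
  have hpol : -2 * C (evW g P) (evW g Q) = -g (P -ᵥ Q) (P -ᵥ Q) :=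
    calc -2 * C (evW g P) (evW g Q)
        = C (evW g P - evW g Q) (evW g P - evW g Q) := by
          simp only [map_sub, LinearMap.sub_apply, hiso, hsymm (evW g Q) (evW g P)]
          ring
      _ = -g (P -ᵥ Q) (P -ᵥ Q) := hneg _ _ _ _ hann hann hrep hrep
  linarith

end CayleyMenger

end

theorem stmt19_general {V A VB B : Type*} [AddCommGroup V] [Module ℝ V] [AddTorsor V A]
    [AddCommGroup VB] [Module ℝ VB] [AddTorsor VB B] [FiniteDimensional ℝ VB] (φ : B →ᵃ[ℝ] A)
    (g : LinearMap.BilinForm ℝ V) (gbar : LinearMap.BilinForm ℝ VB)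
    (hgbar : ∀ x y : VB, gbar x y = g (φ.linear x) (φ.linear y))
    (CA : LinearMap.BilinForm ℝ (Module.Dual ℝ (Wg g A))) (hCA : IsCayleyMenger g A CA)
    (CB : LinearMap.BilinForm ℝ (Module.Dual ℝ (Wg gbar B))) (hCB : IsCayleyMenger gbar B CB) :
    (∀ δ : A → ℝ, δ ∈ Wg g A → δ ∘ φ ∈ Wg gbar B) ∧
    ∀ T : Wg g A →ₗ[ℝ] Wg gbar B,
      (∀ δ : Wg g A, (T δ : B → ℝ) = (δ : A → ℝ) ∘ φ) →
      ∀ vb wb : Module.Dual ℝ (Wg gbar B), CB vb wb = CA (vb.comp T) (wb.comp T) := by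
  obtain rfl : gbar = g.comp φ.linear φ.linear := LinearMap.ext₂ hgbar
  refine ⟨fun δ hδ => comp_affineMap_mem_Wg hδ φ, fun T hT vb wb => ?_⟩
  have key : CB = CA.comp T.dualMap T.dualMap := bilinForm_ext_evW fun P Q =>
    calc CB (evW _ P) (evW _ Q)
        = g (φ P -ᵥ φ Q) (φ P -ᵥ φ Q) / 2 := by
          rw [hCB.apply_evW_evW, LinearMap.BilinForm.comp_apply, AffineMap.linearMap_vsub]
      _ = CA (evW g (φ P)) (evW g (φ Q)) := (hCA.apply_evW_evW _ _).symm
      _ = CA ((evW _ P).comp T) ((evW _ Q).comp T) := by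
          rw [evW_comp_of_coe_apply_eq_comp hT, evW_comp_of_coe_apply_eq_comp hT]
  exact LinearMap.congr_fun₂ key vb wb

/-- Let `φ : B → A` be an affine map between finite-dimensional
real affine spaces, `g` a symmetric bilinear form on `V_A`, and `ḡ ≠ 0` its pullback
along `dφ`.  Then (a) precomposition with `φ` maps `W_g` into `W_{ḡ}`, defining a
linear map `T : W_g → W_{ḡ}`; and (b) for all functionals `v̄, w̄` on `W_{ḡ}`:
`CM_{ḡ}(v̄, w̄) = CM_g(v̄ ∘ T, w̄ ∘ T)`. -/
theorem stmt19 {V A VB B : Type*} [AddCommGroup V] [Module ℝ V] [AddTorsor V A]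
    [AddCommGroup VB] [Module ℝ VB] [AddTorsor VB B]
    [FiniteDimensional ℝ V] [FiniteDimensional ℝ VB]
    (φ : B →ᵃ[ℝ] A)
    (g : LinearMap.BilinForm ℝ V) (hgs : ∀ x y, g x y = g y x)
    (gbar : LinearMap.BilinForm ℝ VB)
    (hgbar : ∀ x y : VB, gbar x y = g (φ.linear x) (φ.linear y))
    (hgbar0 : gbar ≠ 0)
    (CA : LinearMap.BilinForm ℝ (Module.Dual ℝ (Wg g A)))
    (hCA : IsCayleyMenger g A CA)
    (CB : LinearMap.BilinForm ℝ (Module.Dual ℝ (Wg gbar B)))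
    (hCB : IsCayleyMenger gbar B CB) :
    (∀ δ : A → ℝ, δ ∈ Wg g A → (δ ∘ ⇑φ) ∈ Wg gbar B) ∧
    (∀ T : Wg g A →ₗ[ℝ] Wg gbar B,
        (∀ δ : Wg g A, ((T δ : B → ℝ)) = (δ : A → ℝ) ∘ ⇑φ) →
        ∀ vb wb : Module.Dual ℝ (Wg gbar B),
          CB vb wb = CA (vb.comp T) (wb.comp T)) :=
  stmt19_general φ g gbar hgbar CA hCA CB hCB
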